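/- Let S be a finite archimedean commutative semigroup. Then E(S) ≤ D(S) + κ(S). -/

import Mathlib

namespace EGZ

variable {S : Type}

/-- `rep a n = (n+1)·a`, the (n+1)-fold sum of `a` with itself (defined for semigroups,
where the 0-fold sum is unavailable). -/
def rep [AddCommSemigroup S] (a : S) : ℕ → S
  | 0 => a
  | n + 1 => rep a n + a

/-- The sum of all terms of a sequence (= multiset) over the semigroup `S`, computed in
`WithZero S` (i.e. `S` with an extra identity element `0` adjoined); the empty sequence
has sum `0`, and a nonempty sequence has sum `↑s` where `s ∈ S` is its genuine sum. -/
def mSum [AddCommSemigroup S] (T : Multiset S) : WithZero S :=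
  (T.map (fun s => (s : WithZero S))).sum

/-- `σ(A) = σ(B)`, with the paper's convention: the empty sequence is regarded as having
sum equal to the identity element `e` of `S`, whenever `S` has an identity element. -/
def EqSum [AddCommSemigroup S] (A B : Multiset S) : Prop :=
  mSum A = mSum B ∨
    ∃ e : S, (∀ a : S, e + a = a) ∧
      ((mSum A = 0 ∧ mSum B = (e : WithZero S)) ∨
        (mSum A = (e : WithZero S) ∧ mSum B = 0))

/-- A sequence `T` over `S` is reducible if some proper subsequence `B` of `T`
satisfies `σ(B) = σ(T)`. -/
def Reducible [AddCommSemigroup S] (T : Multiset S) : Prop :=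
  ∃ B : Multiset S, B < T ∧ EqSum B T

/-- The (large) Davenport constant `D(S)`: the smallest `ℓ` such that every sequence over
`S` of length at least `ℓ` is reducible. -/
noncomputable def DavC (S : Type) [AddCommSemigroup S] : ℕ :=
  sInf {ℓ : ℕ | ∀ T : Multiset S, ℓ ≤ Multiset.card T → Reducible T}

/-- The property defining the small Davenport constant: `ℓ` is admissible if for every `m`
and every `c₁, …, c_m ∈ S` there is `J ⊆ [1, m]` with `|J| ≤ ℓ` and `Σ_{j=1}^m c_j = Σ_{j∈J} c_j`. -/
def SmallDavProp (S : Type) [AddCommSemigroup S] (ℓ : ℕ) : Prop :=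
  ∀ (m : ℕ) (c : Fin m → S), ∃ J : Finset (Fin m),
    J.card ≤ ℓ ∧ EqSum (J.val.map c) ((Finset.univ : Finset (Fin m)).val.map c)

/-- The small Davenport constant `d(S)`. -/
noncomputable def smallDavC (S : Type) [AddCommSemigroup S] : ℕ :=
  sInf {ℓ : ℕ | SmallDavProp S ℓ}

/-- The period of an element `a ∈ S`: the least `t > 0` such that `r·a = (r+t)·a`
for some `r > 0`. -/
noncomputable def period [AddCommSemigroup S] (a : S) : ℕ :=
  sInf {t : ℕ | 0 < t ∧ ∃ k : ℕ, rep a (k + t) = rep a k}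

/-- `exp(S)`: the least common multiple of the periods of all elements of `S`. -/
noncomputable def expS (S : Type) [AddCommSemigroup S] [Fintype S] : ℕ :=
  (Finset.univ : Finset S).lcm (fun a => period a)

/-- `κ(S) = ⌈|S| / exp(S)⌉ · exp(S)`. -/
noncomputable def kappa (S : Type) [AddCommSemigroup S] [Fintype S] : ℕ :=
  ((Fintype.card S + expS S - 1) / expS S) * expS S

/-- `E(S)`: the smallest positive integer `ℓ` such that every sequence `T` over `S` of
length at least `ℓ` contains a subsequence `T'` with `|T| - |T'| = κ(S)` and `σ(T') = σ(T)`. -/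
noncomputable def EC (S : Type) [AddCommSemigroup S] [Fintype S] : ℕ :=
  sInf {ℓ : ℕ | 0 < ℓ ∧ ∀ T : Multiset S, ℓ ≤ Multiset.card T →
    ∃ B : Multiset S, B ≤ T ∧ Multiset.card T - Multiset.card B = kappa S ∧ EqSum B T}

end EGZ

/-- A commutative semigroup `S` is archimedean: for any `a, b ∈ S` there exist
`m, n > 0` and `x, y ∈ S` with `m·a = b + x` and `n·b = a + y`
(here `EGZ.rep a m = (m+1)·a`, so `m` ranging over `ℕ` gives all positive multiples). -/
def IsArchimedean (S : Type) [AddCommSemigroup S] : Prop :=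
  ∀ a b : S, (∃ m : ℕ, ∃ x : S, EGZ.rep a m = b + x) ∧
    (∃ n : ℕ, ∃ y : S, EGZ.rep b n = a + y)

namespace EGZ

open scoped Pointwise

lemma exists_le_of_le_map {α β : Type} (f : α → β) (T : Multiset α) :
    ∀ W : Multiset β, W ≤ T.map f → ∃ U, U ≤ T ∧ U.map f = W := by
  classical
  induction T using Multiset.induction_on with
  | empty =>
    intro W hW
    refine ⟨0, le_rfl, ?_⟩
    simp at hW
    simp [hW]
  | cons a T ih =>
    intro W hW
    rw [Multiset.map_cons] at hW
    by_cases h : f a ∈ W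
    · obtain ⟨W', rfl⟩ := Multiset.exists_cons_of_mem h
      obtain ⟨U, hU, rfl⟩ := ih W' ((Multiset.cons_le_cons_iff _).1 hW)
      exact ⟨a ::ₘ U, (Multiset.cons_le_cons_iff _).2 hU, by simp⟩
    · obtain ⟨U, hU, rfl⟩ := ih W ((Multiset.le_cons_of_notMem h).1 hW)
      exact ⟨U, hU.trans (Multiset.le_cons_self _ _), rfl⟩

/-- Kemperman–Scherk theorem. -/
lemma scherk {G : Type} [AddCommGroup G] [DecidableEq G] (n : ℕ) :
    ∀ A B : Finset G, B.card ≤ n → 0 ∈ A → 0 ∈ B →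
      (∀ a ∈ A, ∀ b ∈ B, a + b = 0 → a = 0 ∧ b = 0) →
      A.card + B.card ≤ (A + B).card + 1 := by
  induction n with
  | zero =>
    intro A B hB _ h0
    have : B = ∅ := by simpa using hB
    simp [this] at h0
  | succ n ih =>
    intro A B hB hA0 hB0 hu
    by_cases hB1 : ∀ b ∈ B, b = 0
    · have : B = {0} := by
        ext x; simp only [Finset.mem_singleton]
        exact ⟨hB1 x, fun h => h ▸ hB0⟩
      subst this
      simp
    · push Not at hB1
      obtain ⟨b, hb, hb0⟩ := hB1
      have hex : ∃ a ∈ A, b + a ∉ A := by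
        by_contra hcon
        push Not at hcon
        have hsub : A.image (fun a => b + a) ⊆ A := by
          intro x hx
          obtain ⟨a, ha, rfl⟩ := Finset.mem_image.1 hx
          exact hcon a ha
        have heq : A.image (fun a => b + a) = A := by
          apply Finset.eq_of_subset_of_card_le hsub
          rw [Finset.card_image_of_injective _ (add_right_injective b)]
        rw [← heq] at hA0
        obtain ⟨a, ha, hab⟩ := Finset.mem_image.1 hA0
        rw [add_comm] at hab
        exact hb0 (hu a ha b hb hab).2
      obtain ⟨a, ha, hab⟩ := hex
      have hcard := Finset.addDysonETransform.card a (A, B)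
      have hsub := Finset.addDysonETransform.subset a (A, B)
      have hmem1 : ∀ x, x ∈ (Finset.addDysonETransform a (A, B)).1 ↔
          x ∈ A ∨ ∃ y ∈ B, a + y = x := by
        intro x
        simp [Finset.addDysonETransform, Finset.mem_vadd_finset]
      have hmem2 : ∀ x, x ∈ (Finset.addDysonETransform a (A, B)).2 ↔
          x ∈ B ∧ a + x ∈ A := by
        intro x
        simp only [Finset.addDysonETransform, Finset.mem_inter, Finset.mem_vadd_finset]
        refine and_congr_right fun _ => ⟨?_, fun h => ⟨a + x, h, by simp⟩⟩
        rintro ⟨y, hy, rfl⟩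
        simpa using hy
      generalize (Finset.addDysonETransform a (A, B)).1 = A' at *
      generalize (Finset.addDysonETransform a (A, B)).2 = B' at *
      have hlt : B'.card < B.card := by
        apply Finset.card_lt_card
        refine (Finset.ssubset_iff_of_subset fun x hx => ((hmem2 x).1 hx).1).2 ⟨b, hb, ?_⟩
        intro h
        have := ((hmem2 b).1 h).2
        rw [add_comm] at this
        exact hab this
      have := ih A' B' (by omega) ((hmem1 0).2 (Or.inl hA0))
        ((hmem2 0).2 ⟨hB0, by simpa using ha⟩) (by
          intro x hx y hy hxy
          obtain ⟨hyB, hyA⟩ := (hmem2 y).1 hy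
          rcases (hmem1 x).1 hx with hx | ⟨z, hz, rfl⟩
          · exact hu x hx y hyB hxy
          · obtain ⟨h1, h2⟩ := hu (a + y) hyA z hz (by rw [← hxy]; abel)
            obtain ⟨h3, h4⟩ := hu a ha y hyB h1
            simp [h2, h3, h4])
      have h2 := Finset.card_le_card hsub
      simp only at hcard h2
      omega

lemma sums_card {G : Type} [AddCommGroup G] [DecidableEq G] (h : ℕ) :
    ∀ T : Multiset G, (∀ g, T.count g ≤ h) →
      (∀ U ≤ T, U.card ≤ h → U.sum = 0 → U = 0) →
      ∃ A : Finset G, 1 + T.card ≤ A.card ∧ 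
        ∀ a, a ∈ A ↔ ∃ U ≤ T, U.card ≤ h ∧ U.sum = a := by
  induction h with
  | zero =>
    intro T hc _
    have : T = 0 := by
      ext g; simpa using hc g
    subst this
    refine ⟨{0}, by simp, fun a => ?_⟩
    simp [eq_comm]
  | succ h ih =>
    intro T hc hz
    have hd : T.dedup ≤ T := Multiset.dedup_le T
    obtain ⟨A, hA, hAm⟩ := ih (T - T.dedup) (by
      intro g
      have := hc g
      rw [Multiset.count_sub, Multiset.count_dedup]
      split_ifs with hg
      · omega
      · simp [Multiset.count_eq_zero.2 hg]) (fun U hU hUc => hz U (hU.trans (Multiset.sub_le_self _ _)) (by omega))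
    have h0 : (0:G) ∉ T := by
      intro h0
      have := hz {0} (by simpa using h0) (by simp) (by simp)
      simp at this
    have hkey : ∀ U ≤ T - T.dedup, ∀ b ∈ T, b ::ₘ U ≤ T := by
      intro U hU b hb
      have : ({b} : Multiset G) ≤ T.dedup := by simpa using hb
      have h3 := add_le_add this hU
      rwa [add_tsub_cancel_of_le hd, Multiset.singleton_add] at h3
    have hs := scherk (insert 0 T.toFinset).card A (insert 0 T.toFinset) le_rfl
      ((hAm 0).2 ⟨0, by simp⟩) (by simp) (by
        intro a ha b hb hab
        obtain ⟨U, hU, hUc, rfl⟩ := (hAm a).1 ha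
        rw [Finset.mem_insert, Multiset.mem_toFinset] at hb
        rcases hb with rfl | hb
        · simpa using hab
        · have := hz (b ::ₘ U) (hkey U hU b hb) (by simpa using hUc)
            (by rw [Multiset.sum_cons, add_comm]; exact hab)
          simp at this)
    have hci : (insert 0 T.toFinset).card = T.dedup.card + 1 := by
      rw [Finset.card_insert_of_notMem (by simpa using h0)]; rfl
    have hcs := Multiset.card_sub hd
    have hcl := Multiset.card_le_card hd
    -- the set of all sums
    refine ⟨((T.powerset.toFinset).filter (fun U => U.card ≤ h + 1)).image Multiset.sum, ?_, ?_⟩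
    · have : A + insert 0 T.toFinset ⊆
          ((T.powerset.toFinset).filter (fun U => U.card ≤ h + 1)).image Multiset.sum := by
        intro x hx
        obtain ⟨a, ha, b, hb, rfl⟩ := Finset.mem_add.1 hx
        obtain ⟨U, hU, hUc, rfl⟩ := (hAm a).1 ha
        rw [Finset.mem_insert, Multiset.mem_toFinset] at hb
        simp only [Finset.mem_image, Finset.mem_filter, Multiset.mem_toFinset,
          Multiset.mem_powerset]
        rcases hb with rfl | hb
        · exact ⟨U, ⟨hU.trans (Multiset.sub_le_self _ _), by omega⟩, by simp⟩
        · exact ⟨b ::ₘ U, ⟨hkey U hU b hb, by simpa using hUc⟩, by simp [add_comm]⟩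
      have := Finset.card_le_card this
      omega
    · intro a
      simp [and_assoc]

lemma short {G : Type} [AddCommGroup G] [Fintype G] [DecidableEq G] (h : ℕ)
    (T : Multiset G) (hc : ∀ g, T.count g ≤ h) (hT : Fintype.card G ≤ T.card) :
    ∃ U ≤ T, U.card ≤ h ∧ U.sum = 0 ∧ U ≠ 0 := by
  by_contra hcon
  push Not at hcon
  obtain ⟨A, hA, -⟩ := sums_card h T hc hcon
  have := Finset.card_le_univ A
  omega

lemma reduce {G : Type} [AddCommGroup G] [Fintype G] [DecidableEq G] (h k : ℕ)
    (hk : Fintype.card G ≤ k) (n : ℕ) :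
    ∀ W : Multiset G, W.card ≤ n → (∀ g, W.count g ≤ h) → W.sum = 0 → k ≤ W.card + h →
    ∃ U ≤ W, U.sum = 0 ∧ U.card ≤ k ∧ k ≤ U.card + h := by
  induction n with
  | zero => 
    intro W h1 h2 h3 h4
    exact ⟨W, le_rfl, h3, by omega, h4⟩
  | succ n ih =>
    intro W h1 h2 h3 h4
    by_cases hW : W.card ≤ k
    · exact ⟨W, le_rfl, h3, hW, h4⟩
    obtain ⟨V, hV, hVc, hVs, hV0⟩ := short h W h2 (by omega)
    have hVp : 0 < V.card := Multiset.card_pos.2 hV0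
    obtain ⟨X, rfl⟩ := Multiset.le_iff_exists_add.1 hV
    simp only [Multiset.card_add, Multiset.sum_add, hVs, zero_add] at *
    obtain ⟨U, hU, h5⟩ := ih X (by omega) (fun g => by
      have := h2 g
      rw [Multiset.count_add] at this
      omega) h3 (by omega)
    exact ⟨U, hU.trans (Multiset.le_add_left _ _), h5⟩

lemma maxzero {G : Type} [AddCommGroup G] (D : ℕ)
    (hD : ∀ T : Multiset G, D ≤ T.card → ∃ U ≤ T, U ≠ 0 ∧ U.sum = 0) (n : ℕ) :
    ∀ T : Multiset G, T.card ≤ n → ∃ W ≤ T, W.sum = 0 ∧ T.card ≤ W.card + D := by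
  induction n with
  | zero =>
    intro T hT
    exact ⟨0, by simp, by simp, by omega⟩
  | succ n ih =>
    intro T hT
    by_cases h : T.card ≤ D
    · exact ⟨0, by simp, by simp, by omega⟩
    obtain ⟨V, hV, hV0, hVs⟩ := hD T (by omega)
    have hVp : 0 < V.card := Multiset.card_pos.2 hV0
    obtain ⟨X, rfl⟩ := Multiset.le_iff_exists_add.1 hV
    simp only [Multiset.card_add] at *
    obtain ⟨W, hW, h1, h2⟩ := ih X (by omega)
    exact ⟨V + W, by simpa using hW, by simp [hVs, h1], by simp; omega⟩

lemma gao {G : Type} [AddCommGroup G] [Fintype G] (D k : ℕ)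
    (hD : ∀ T : Multiset G, D ≤ T.card → ∃ U ≤ T, U ≠ 0 ∧ U.sum = 0)
    (hk : Fintype.card G ≤ k) (hke : ∀ g : G, k • g = 0)
    (T : Multiset G) (hT : D + k ≤ T.card) : ∃ W ≤ T, W.card = k ∧ W.sum = 0 := by
  classical
  obtain ⟨g, -, hg⟩ := Finset.exists_max_image (Finset.univ : Finset G) (fun g => T.count g)
    ⟨0, by simp⟩
  set T0 := T.map (fun x => x - g) with hT0
  have hcount : ∀ x, T0.count x = T.count (x + g) := by
    intro x
    have := Multiset.count_map_eq_count' (fun x => x - g) T (sub_left_injective) (x + g)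
    simpa using this
  have hc : ∀ x, T0.count x ≤ T0.count 0 := by
    intro x
    rw [hcount, hcount, zero_add]
    exact hg _ (by simp)
  set h := T0.count 0 with hh
  have hsplit : Multiset.replicate h 0 + T0.filter (fun x => ¬ x = 0) = T0 := by
    rw [hh, ← Multiset.filter_eq' T0 0]
    convert Multiset.filter_add_not (fun x => x = 0) T0
  have hcard : T0.card = T.card := by simp [hT0]
  have hcard2 := congrArg Multiset.card hsplit
  rw [Multiset.card_add, Multiset.card_replicate] at hcard2
  obtain ⟨W, hW, hWs, hWc⟩ := maxzero D hD _ (T0.filter (fun x => ¬ x = 0)) le_rfl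
  obtain ⟨U, hU, hUs, hU1, hU2⟩ := reduce h k hk _ W le_rfl (fun x =>
    (Multiset.count_le_of_le x (hW.trans (Multiset.filter_le _ _))).trans (hc x)) hWs (by omega)
  have hle : Multiset.replicate (k - U.card) 0 + U ≤ T0 := by
    rw [← hsplit]
    refine add_le_add ?_ (hU.trans hW)
    rw [Multiset.replicate_le_replicate]
    omega
  obtain ⟨V, hV, hVm⟩ := exists_le_of_le_map _ _ _ hle
  have hVc : V.card = k := by
    have := congrArg Multiset.card hVm
    simp at this
    omega
  refine ⟨V, hV, hVc, ?_⟩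
  have := congrArg Multiset.sum hVm
  rw [Multiset.sum_map_sub] at this
  simpa [hVc, hke, hUs] using this

end EGZ

namespace EGZ

section semi
variable {S : Type} [AddCommSemigroup S]

lemma mSum_eq' (A : Multiset S) :
    mSum A = (Multiset.map (WithZero.coe : S → WithZero S) A).sum := by
  simp [mSum, Multiset.bind_singleton]

lemma mSum_add (A B : Multiset S) : mSum (A + B) = mSum A + mSum B := by
  simp [mSum]

lemma mSum_ne (A : Multiset S) (h : A ≠ 0) : ∃ s : S, mSum A = (s : WithZero S) := by
  induction A using Multiset.induction_on with
  | empty => exact absurd rfl h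
  | cons a T ih =>
    by_cases hT : T = 0
    · subst hT
      exact ⟨a, by simp [mSum]⟩
    · obtain ⟨s, hs⟩ := ih hT
      refine ⟨a + s, ?_⟩
      rw [← Multiset.singleton_add, mSum_add, hs]
      simp [mSum]

lemma rep_period [Finite S] (a : S) : 0 < period a := by
  have hne : {t : ℕ | 0 < t ∧ ∃ k : ℕ, rep a (k + t) = rep a k}.Nonempty := by
    obtain ⟨i, j, hij, h⟩ := Finite.exists_ne_map_eq_of_infinite (rep a)
    rcases lt_or_gt_of_ne hij with hl | hl
    · exact ⟨j - i, by omega, i, by rw [Nat.add_sub_cancel' hl.le, h]⟩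
    · exact ⟨i - j, by omega, j, by rw [Nat.add_sub_cancel' hl.le, h]⟩
  exact (Nat.sInf_mem hne).1

lemma period_spec [Finite S] (a : S) : ∃ k : ℕ, rep a (k + period a) = rep a k := by
  have hne : {t : ℕ | 0 < t ∧ ∃ k : ℕ, rep a (k + t) = rep a k}.Nonempty := by
    by_contra h
    have := rep_period a
    rw [period, Set.not_nonempty_iff_eq_empty.1 h] at this
    simp at this
  exact (Nat.sInf_mem hne).2

lemma dav_spec [Fintype S] (T : Multiset S) (hT : DavC S ≤ T.card) : Reducible T := by
  classical
  let _ : Fintype (WithZero S) := inferInstanceAs (Fintype (Option S))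
  have hne : {ℓ : ℕ | ∀ T : Multiset S, ℓ ≤ Multiset.card T → Reducible T}.Nonempty := by
    refine ⟨Fintype.card (WithZero S), fun T hT => ?_⟩
    induction T using Quotient.inductionOn with
    | h l =>
    have hT' : Fintype.card (WithZero S) ≤ l.length := hT
    obtain ⟨i, j, hij, h⟩ := Fintype.exists_ne_map_eq_of_card_lt
      (fun i : Fin (l.length + 1) => mSum ((l.take i : List S) : Multiset S))
      (by simp only [Fintype.card_fin]; omega)
    wlog hl : i < j generalizing i j
    · exact this j i hij.symm h.symm (lt_of_le_of_ne (not_lt.1 hl) hij.symm)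
    have hl' : (i : ℕ) < j := hl
    have hj := j.2
    refine ⟨((l.take i ++ l.drop j : List S) : Multiset S), ?_, Or.inl ?_⟩
    · refine lt_of_le_of_ne ?_ ?_
      · refine List.Sublist.subperm ?_
        conv_rhs => rw [← List.take_append_drop j l]
        refine List.Sublist.append ?_ (List.Sublist.refl _)
        exact (List.take_prefix_take_left hl'.le).sublist
      · intro h
        have := congrArg Multiset.card h
        simp at this
        omega
    · rw [← Multiset.coe_add, mSum_add]
      rw [h, ← mSum_add, Multiset.coe_add, List.take_append_drop]
      rfl
  exact Nat.sInf_mem hne T hT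

lemma absorb (harch : IsArchimedean S) (e : S) (b c : S) (h : b = b + c) : b + e = b ∨ e + e ≠ e := by
  by_cases he : e + e = e
  · left
    have hr : ∀ n, b + rep c n = b := by
      intro n
      induction n with
      | zero => exact h.symm
      | succ n ih => rw [rep, ← add_assoc, ih, ← h]
    obtain ⟨⟨m, x, hx⟩, -⟩ := harch c e
    have h1 := hr m
    rw [hx] at h1
    rw [← h1]
    calc b + (e + x) + e = b + ((e + e) + x) := by ac_rfl
      _ = _ := by rw [he]
  · right; exact he

lemma rep_idem (e : S) (he : e + e = e) (n : ℕ) : rep e n = e := by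
  induction n with
  | zero => rfl
  | succ n ih => rw [rep, ih, he]

lemma inv_ex (harch : IsArchimedean S) (e : S) (he : e + e = e) (x : S) :
    ∃ y, e + y = y ∧ y + x = e := by
  obtain ⟨⟨m, y, hy⟩, -⟩ := harch e x
  rw [rep_idem e he] at hy
  refine ⟨e + y, by rw [← add_assoc, he], ?_⟩
  calc e + y + x = e + (x + y) := by ac_rfl
    _ = e := by rw [← hy, he]

/-- The kernel of `S`. -/
abbrev Ker (e : S) : Type := {x : S // e + x = x}

/-- The group structure on the kernel. -/
@[reducible] noncomputable def kerGroup (harch : IsArchimedean S) (e : S) (he : e + e = e) :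
    AddCommGroup (Ker e) :=
  letI : Add (Ker e) := ⟨fun x y => ⟨x.1 + y.1, by rw [← add_assoc, x.2]⟩⟩
  letI : Zero (Ker e) := ⟨⟨e, he⟩⟩
  letI : Neg (Ker e) := ⟨fun x => ⟨(inv_ex harch e he x.1).choose,
    (inv_ex harch e he x.1).choose_spec.1⟩⟩
  { AddGroup.ofLeftAxioms (G := Ker e)
      (fun a b c => Subtype.ext (add_assoc _ _ _))
      (fun a => Subtype.ext a.2)
      (fun a => Subtype.ext (inv_ex harch e he a.1).choose_spec.2) with
    add_comm := fun a b => Subtype.ext (add_comm _ _) }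

lemma main_aux [Fintype S] (harch : IsArchimedean S) (e : S) (he : e + e = e)
    (T : Multiset S) (hT : DavC S + kappa S ≤ T.card) :
    ∃ B : Multiset S, B ≤ T ∧ Multiset.card T - Multiset.card B = kappa S ∧ EqSum B T := by
  classical
  letI := kerGroup harch e he
  letI : Fintype (Ker e) := Subtype.fintype _
  have hval_add : ∀ x y : Ker e, (x + y).1 = x.1 + y.1 := fun _ _ => rfl
  have hval_zero : (0 : Ker e).1 = e := rfl
  let φ : AddHom S (Ker e) :=
    { toFun := fun x => ⟨e + x, by rw [← add_assoc, he]⟩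
      map_add' := fun x y => Subtype.ext (by
        rw [hval_add]
        calc e + (x + y) = (e + e) + (x + y) := by rw [he]
          _ = e + x + (e + y) := by ac_rfl) }
  have hφ : ∀ x, (φ x).1 = e + x := fun _ => rfl
  have hφ2 : ∀ x : Ker e, φ x.1 = x := fun x => Subtype.ext x.2
  let ψ : WithZero S →+ Ker e := WithZero.lift φ
  have hψ : ∀ s : S, ψ (s : WithZero S) = φ s := fun s => WithZero.lift_coe φ s
  have hψm : ∀ A : Multiset S, ψ (mSum A) = (A.map φ).sum := by
    intro A
    rw [mSum_eq', map_multiset_sum, Multiset.map_map]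
    rfl
  have hid : ∀ e' : S, (∀ a, e' + a = a) → φ e' = 0 := by
    intro e' h
    apply Subtype.ext
    rw [hφ, hval_zero, add_comm, h]
  have hEq : ∀ A B : Multiset S, EqSum A B → (A.map φ).sum = (B.map φ).sum := by
    intro A B h
    rw [← hψm, ← hψm]
    rcases h with h | ⟨e', h, ⟨h1, h2⟩ | ⟨h1, h2⟩⟩
    · rw [h]
    · rw [h1, h2, hψ, hid e' h, map_zero]
    · rw [h1, h2, hψ, hid e' h, map_zero]
  -- Davenport property of the kernel
  have hD : ∀ T : Multiset (Ker e), DavC S ≤ T.card → ∃ U ≤ T, U ≠ 0 ∧ U.sum = 0 := by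
    intro T hT
    obtain ⟨B, hB, hBe⟩ := dav_spec (T.map Subtype.val) (by simpa using hT)
    obtain ⟨U, hU, rfl⟩ := exists_le_of_le_map _ _ _ hB.le
    have h1 := hEq _ _ hBe
    have h2 : ∀ A : Multiset (Ker e), (A.map Subtype.val).map φ = A := by
      intro A
      rw [Multiset.map_map]
      conv_rhs => rw [← Multiset.map_id A]
      exact Multiset.map_congr rfl fun x _ => hφ2 x
    rw [h2, h2] at h1
    obtain ⟨V, rfl⟩ := Multiset.le_iff_exists_add.1 hU
    refine ⟨V, Multiset.le_add_left _ _, ?_, ?_⟩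
    · rintro rfl
      simp at hB
    · simpa using h1
  -- the exponent
  have hexp_pos : 0 < expS S := by
    refine Nat.pos_of_ne_zero fun h => ?_
    rw [expS, Finset.lcm_eq_zero_iff] at h
    obtain ⟨a, -, ha⟩ := h
    exact (rep_period a).ne' ha
  have hkS : Fintype.card S ≤ kappa S := by
    rw [kappa]
    have h1 := Nat.div_add_mod (Fintype.card S + expS S - 1) (expS S)
    have h2 := Nat.mod_lt (Fintype.card S + expS S - 1) hexp_pos
    rw [mul_comm] at h1
    omega
  have hk : Fintype.card (Ker e) ≤ kappa S :=
    (Fintype.card_subtype_le _).trans hkS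
  have hrep : ∀ (x : Ker e) (n : ℕ), φ (rep x.1 n) = (n + 1) • x := by
    intro x n
    induction n with
    | zero => simp [rep, hφ2]
    | succ n ih => rw [rep, map_add, ih, hφ2, succ_nsmul _ (n + 1)]
  have hke : ∀ x : Ker e, kappa S • x = 0 := by
    intro x
    have h1 : period x.1 • x = 0 := by
      obtain ⟨k, hk⟩ := period_spec x.1
      have h := congrArg φ hk
      rw [hrep, hrep, show k + period x.1 + 1 = (k + 1) + period x.1 by ring, add_nsmul] at h
      simpa using h
    have h2 : period x.1 ∣ kappa S :=
      (Finset.dvd_lcm (Finset.mem_univ x.1)).trans (Dvd.intro_left _ rfl)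
    obtain ⟨q, hq⟩ := h2
    rw [hq, mul_comm, mul_nsmul', h1, nsmul_zero]
  obtain ⟨W0, hW0, hW0c, hW0s⟩ := gao (DavC S) (kappa S) hD hk hke (T.map φ) (by simpa using hT)
  obtain ⟨W, hW, rfl⟩ := exists_le_of_le_map _ _ _ hW0
  rw [Multiset.card_map] at hW0c
  obtain ⟨B, rfl⟩ := Multiset.le_iff_exists_add.1 hW
  rw [Multiset.card_add] at hT
  refine ⟨B, Multiset.le_add_left _ _, by rw [Multiset.card_add]; omega, Or.inl ?_⟩
  have hWne : W ≠ 0 := by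
    rintro rfl
    have : 0 < Fintype.card S := Fintype.card_pos_iff.2 ⟨e⟩
    simp at hW0c
    omega
  obtain ⟨w, hw⟩ := mSum_ne W hWne
  have hwe : w + e = e := by
    rw [← hψm, hw, hψ] at hW0s
    have := congrArg Subtype.val hW0s
    rw [hφ, hval_zero] at this
    rw [add_comm, this]
  obtain ⟨B', hB', hBe⟩ := dav_spec B (by omega)
  have hBne : B ≠ 0 := by
    rintro rfl
    exact absurd hB' (by simp)
  obtain ⟨b, hb⟩ := mSum_ne B hBne
  have hbe : b + e = b := by
    rcases hBe with h | ⟨e', h, ⟨h1, h2⟩ | ⟨h1, h2⟩⟩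
    · obtain ⟨C, rfl⟩ := Multiset.le_iff_exists_add.1 hB'.le
      have hC : C ≠ 0 := by
        rintro rfl
        simp at hB'
      obtain ⟨c, hc⟩ := mSum_ne C hC
      have h3 : b = b + c := by
        have : mSum (B' + C) = mSum (B' + C) + mSum C := by
          conv_rhs => rw [← h]
          rw [mSum_add]
        rw [hb, hc, ← WithZero.coe_add] at this
        exact WithZero.coe_inj.1 this
      rcases absorb harch e b c h3 with h4 | h4
      · exact h4
      · exact absurd he h4
    · rw [hb] at h2
      have h2 := WithZero.coe_inj.1 h2
      subst h2
      rcases absorb harch e b b (h b).symm with h4 | h4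
      · exact h4
      · exact absurd he h4
    · rw [hb] at h2
      exact absurd h2 WithZero.coe_ne_zero
  rw [mSum_add, hw, hb, ← WithZero.coe_add]
  congr 1
  calc b = b + e := hbe.symm
    _ = b + (w + e) := by rw [hwe]
    _ = w + (b + e) := by ac_rfl
    _ = w + b := by rw [hbe]

end semi

end EGZ

/-- For a finite archimedean commutative semigroup `S`,
`E(S) ≤ D(S) + κ(S)`. -/
theorem E_le_of_archimedean (S : Type) [AddCommSemigroup S] [Fintype S]
    (harch : IsArchimedean S) :
    EGZ.EC S ≤ EGZ.DavC S + EGZ.kappa S := by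
  rcases isEmpty_or_nonempty S with hS | hS
  · have hred := EGZ.dav_spec (S := S)
    have hpos : 0 < EGZ.DavC S := by
      by_contra h
      obtain ⟨B, hB, -⟩ := hred 0 (by simpa using h)
      exact absurd hB (by simp)
    refine Nat.sInf_le ⟨by omega, fun T hT => ?_⟩
    have : T = 0 := Multiset.eq_zero_of_forall_notMem fun a => (hS.false a).elim
    subst this
    simp at hT
    omega
  · obtain ⟨e, he⟩ : ∃ e : S, e + e = e := by
      letI : TopologicalSpace S := ⊥
      haveI : DiscreteTopology S := ⟨rfl⟩
      exact exists_idempotent_of_compact_t2_of_continuous_add_left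
        (fun _ => continuous_of_discreteTopology)
    refine Nat.sInf_le ⟨?_, fun T hT => EGZ.main_aux harch e he T hT⟩
    have hpos : 0 < EGZ.DavC S := by
      by_contra h
      obtain ⟨B, hB, -⟩ := EGZ.dav_spec (S := S) 0 (by simpa using h)
      exact absurd hB (by simp)
    omega
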